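/- Let L be a Borel probability measure on (0,∞) with ∫ λ² dL(λ) < ∞, let β ≥ 0, and let sℓ, ss, μℓ, μs ≥ 0 be real numbers. Define R(t) := sℓ·∫ (λt − 𝔄(t,λ,β)) dL(λ) + ss·∫ 𝔄(t,λ,β) dL(λ) + ∫ [ μℓ²·(𝔅(t,λ,0,0) − 2·𝔅(t,λ,0,β) + 𝔅(t,λ,β,β)) + 2·μℓ·μs·(𝔅(t,λ,0,β) − 𝔅(t,λ,β,β)) + μs²·𝔅(t,λ,β,β) ] dL(λ). Then R(t)/t² tends to ∫ ( μℓ·β/(β+λ) + μs·λ/(β+λ) )²·λ² dL(λ) as t → ∞. -/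

import Mathlib

open MeasureTheory Real Filter

/-- The quantity 𝔄(t,λ,β) from the paper. -/
noncomputable def frakA (t lam β : ℝ) : ℝ :=
  (lam / (β + lam) ^ 2) * (β - β * Real.exp (-((β + lam) * t)) + (β + lam) * lam * t)

/-- The quantity 𝔅(t,λ,Θ,Δ) from the paper. -/
noncomputable def frakB (t lam Θ Δ : ℝ) : ℝ :=
  lam ^ 2 *
    ∫ y in (0:ℝ)..t,
      Real.exp (-((lam + Θ) * y)) *
        ∫ v in (0:ℝ)..(t - y),
          Real.exp (-((lam + Δ) * v)) * ((lam * (t - y - v) + 2) ^ 2 - 2)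

/-- Bound for an exponential convolution on a bounded interval. -/
lemma conv_bound (F : ℝ → ℝ) (a t M : ℝ) (ha : 0 < a) (ht : 0 ≤ t) (hM : 0 ≤ M)
    (hF : ∀ x, 0 ≤ x → x ≤ t → |F x| ≤ M) :
    |∫ v in (0:ℝ)..t, Real.exp (-(a * v)) * F (t - v)| ≤ M / a := by
  have hc : Continuous (fun v : ℝ => M * Real.exp (-(a * v))) := by fun_prop
  have h1 : ‖∫ v in (0:ℝ)..t, Real.exp (-(a * v)) * F (t - v)‖
      ≤ ∫ v in (0:ℝ)..t, M * Real.exp (-(a * v)) := by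
    apply intervalIntegral.norm_integral_le_of_norm_le ht
    · refine Filter.Eventually.of_forall fun v hv => ?_
      rw [norm_mul, Real.norm_eq_abs, Real.norm_eq_abs, abs_of_pos (Real.exp_pos _), mul_comm]
      exact mul_le_mul_of_nonneg_right (hF _ (by linarith [hv.2]) (by linarith [hv.1]))
        (Real.exp_pos _).le
    · exact hc.intervalIntegrable _ _
  have h2 : ∫ v in (0:ℝ)..t, M * Real.exp (-(a * v))
      = (-(M / a) * Real.exp (-(a * t))) - (-(M / a) * Real.exp (-(a * 0))) := by
    apply intervalIntegral.integral_eq_sub_of_hasDerivAt (f := fun v => -(M / a) * Real.exp (-(a * v)))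
    · intro x _
      have h := ((((hasDerivAt_id x).const_mul a).neg).exp).const_mul (-(M / a))
      have e : -(M / a) * (Real.exp (-(a * x)) * -(a * 1)) = M * Real.exp (-(a * x)) := by
        field_simp
      rw [← e]
      exact h
    · exact hc.intervalIntegrable _ _
  rw [Real.norm_eq_abs] at h1
  refine h1.trans ?_
  rw [h2]
  have : 0 ≤ M / a * Real.exp (-(a * t)) := by positivity
  simp
  linarith

/-- Quadratic asymptotics pass through exponential convolutions. -/
lemma conv_tendsto (F : ℝ → ℝ) (a c C : ℝ) (ha : 0 < a) (hC : 0 ≤ C) (hFc : Continuous F)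
    (hF : ∀ x, 0 ≤ x → |F x| ≤ C * (1 + x) ^ 2)
    (hlim : Tendsto (fun x => F x / x ^ 2) atTop (nhds c)) :
    Tendsto (fun t => (∫ v in (0:ℝ)..t, Real.exp (-(a * v)) * F (t - v)) / t ^ 2) atTop
      (nhds (c / a)) := by
  have hexp : IntegrableOn (fun v : ℝ => Real.exp (-(a * v))) (Set.Ioi 0) := by
    simpa [neg_mul] using integrableOn_exp_mul_Ioi (neg_neg_of_pos ha) 0
  have hval : ∫ v in Set.Ioi (0:ℝ), Real.exp (-(a * v)) * c = c / a := by
    rw [integral_mul_const]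
    have := integral_exp_mul_Ioi (neg_neg_of_pos ha) 0
    simp only [neg_mul] at this
    rw [this]
    simp
    field_simp
  rw [← hval]
  have key : Tendsto (fun t : ℝ => ∫ v in Set.Ioi (0:ℝ),
      (Set.Iic t).indicator (fun v => Real.exp (-(a * v)) * F (t - v) / t ^ 2) v) atTop
      (nhds (∫ v in Set.Ioi (0:ℝ), Real.exp (-(a * v)) * c)) := by
    apply tendsto_integral_filter_of_dominated_convergence
      (fun v => Real.exp (-(a * v)) * (C * 4))
    · refine Filter.Eventually.of_forall fun t => ?_
      apply AEStronglyMeasurable.indicator _ measurableSet_Iic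
      apply Continuous.aestronglyMeasurable
      fun_prop
    · filter_upwards [eventually_ge_atTop (1:ℝ)] with t ht
      filter_upwards [ae_restrict_mem measurableSet_Ioi] with v hv
      have hv : 0 < v := hv
      by_cases h : v ≤ t
      · rw [Set.indicator_of_mem (show v ∈ Set.Iic t from h), norm_div, norm_mul,
          Real.norm_eq_abs, Real.norm_eq_abs, Real.norm_eq_abs, abs_of_pos (Real.exp_pos _),
          mul_div_assoc, abs_of_pos (show 0 < t ^ 2 by positivity)]
        apply mul_le_mul_of_nonneg_left _ (Real.exp_pos _).le
        rw [div_le_iff₀ (by positivity)]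
        refine (hF _ (by linarith)).trans ?_
        rw [mul_assoc]
        apply mul_le_mul_of_nonneg_left _ hC
        nlinarith
      · rw [Set.indicator_of_notMem (by simpa using h)]
        simp only [norm_zero]
        positivity
    · exact hexp.mul_const _
    · refine Filter.Eventually.of_forall fun v => ?_
      have h1 : Tendsto (fun t : ℝ => t - v) atTop atTop := tendsto_atTop_add_const_right _ _ tendsto_id
      have h2 := hlim.comp h1
      have h3 : Tendsto (fun t : ℝ => ((t - v) / t) ^ 2) atTop (nhds 1) := by
        have : Tendsto (fun t : ℝ => (1 - v * t⁻¹) ^ 2) atTop (nhds ((1 - v * 0) ^ 2)) :=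
          ((tendsto_inv_atTop_zero.const_mul v).const_sub 1).pow 2
        simp only [mul_zero, sub_zero, one_pow] at this
        refine this.congr' ?_
        filter_upwards [eventually_gt_atTop 0] with t ht
        field_simp
      have h4 := (h2.mul h3).const_mul (Real.exp (-(a * v)))
      rw [mul_one] at h4
      refine h4.congr' ?_
      filter_upwards [eventually_gt_atTop 0, eventually_gt_atTop v] with t ht htv
      rw [Set.indicator_of_mem (show v ∈ Set.Iic t from htv.le)]
      have : t - v ≠ 0 := by linarith
      simp only [Function.comp]
      field_simp
  refine key.congr' ?_
  filter_upwards [eventually_ge_atTop 0] with t ht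
  rw [intervalIntegral.integral_of_le ht, setIntegral_indicator measurableSet_Iic,
    ← integral_div, Set.Ioi_inter_Iic]

lemma frakB_continuous (t Θ Δ : ℝ) : Continuous (fun lam => frakB t lam Θ Δ) := by
  unfold frakB
  apply (continuous_pow 2).mul
  apply intervalIntegral.continuous_parametric_intervalIntegral_of_continuous _ continuous_const
  apply Continuous.mul (by fun_prop)
  apply intervalIntegral.continuous_parametric_intervalIntegral_of_continuous
    (f := fun (p : ℝ × ℝ) v => Real.exp (-((p.1 + Δ) * v)) * ((p.1 * (t - p.2 - v) + 2) ^ 2 - 2))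
  · fun_prop
  · fun_prop

/-- The inner convolution. -/
noncomputable def innerG (lam Δ : ℝ) (x : ℝ) : ℝ :=
  ∫ v in (0:ℝ)..x, Real.exp (-((lam + Δ) * v)) * (fun z => (lam * z + 2) ^ 2 - 2) (x - v)

lemma frakB_eq (t lam Θ Δ : ℝ) : frakB t lam Θ Δ =
    lam ^ 2 * ∫ y in (0:ℝ)..t, Real.exp (-((lam + Θ) * y)) * innerG lam Δ (t - y) := rfl

lemma innerG_continuous (lam Δ : ℝ) : Continuous (innerG lam Δ) := by
  unfold innerG
  apply intervalIntegral.continuous_parametric_intervalIntegral_of_continuous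
  · fun_prop
  · fun_prop

lemma innerG_bound (lam Δ x : ℝ) (hl : 0 < lam) (hΔ : 0 ≤ Δ) (hx : 0 ≤ x) :
    |innerG lam Δ x| ≤ (lam * x + 2) ^ 2 / (lam + Δ) := by
  apply conv_bound (fun z => (lam * z + 2) ^ 2 - 2) (lam + Δ) x _ (by linarith) hx (by positivity)
  intro z hz hzx
  have h1 : 0 ≤ lam * z := by positivity
  have h2 : lam * z ≤ lam * x := by gcongr
  rw [abs_le]
  constructor <;> nlinarith

lemma frakB_bound (t lam Θ Δ : ℝ) (hl : 0 < lam) (hΘ : 0 ≤ Θ) (hΔ : 0 ≤ Δ) (ht : 0 ≤ t) :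
    |frakB t lam Θ Δ| ≤ (lam * t + 2) ^ 2 := by
  rw [frakB_eq, abs_mul, abs_of_pos (show 0 < lam ^ 2 by positivity)]
  have h := conv_bound (innerG lam Δ) (lam + Θ) t ((lam * t + 2) ^ 2 / lam) (by linarith) ht
    (by positivity) (by
      intro x hx hxt
      refine (innerG_bound lam Δ x hl hΔ hx).trans ?_
      gcongr
      linarith)
  calc _ ≤ lam ^ 2 * ((lam * t + 2) ^ 2 / lam / (lam + Θ)) := by gcongr
    _ ≤ lam ^ 2 * ((lam * t + 2) ^ 2 / lam / lam) := by gcongr; linarith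
    _ = _ := by field_simp

lemma frakB_tendsto (lam Θ Δ : ℝ) (hl : 0 < lam) (hΘ : 0 ≤ Θ) (hΔ : 0 ≤ Δ) :
    Tendsto (fun t => frakB t lam Θ Δ / t ^ 2) atTop
      (nhds (lam ^ 2 * (lam ^ 2 / (lam + Δ) / (lam + Θ)))) := by
  have hpoly : ∀ x, 0 ≤ x → (lam * x + 2) ^ 2 ≤ (lam + 2) ^ 2 * (1 + x) ^ 2 := by
    intro x hx
    rw [← mul_pow]
    have : 0 ≤ lam * x := by positivity
    gcongr
    nlinarith
  have h1 : Tendsto (fun x => innerG lam Δ x / x ^ 2) atTop (nhds (lam ^ 2 / (lam + Δ))) := by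
    apply conv_tendsto (fun z => (lam * z + 2) ^ 2 - 2) (lam + Δ) (lam ^ 2) ((lam + 2) ^ 2) (by linarith) (by positivity) (by fun_prop)
    · intro x hx
      refine le_trans ?_ (hpoly x hx)
      have : 0 ≤ lam * x := by positivity
      rw [abs_le]
      constructor <;> nlinarith
    · have : Tendsto (fun x : ℝ => (lam + 2 * x⁻¹) ^ 2 - 2 * (x⁻¹) ^ 2) atTop
          (nhds ((lam + 2 * 0) ^ 2 - 2 * 0 ^ 2)) :=
        (((tendsto_inv_atTop_zero.const_mul 2).const_add lam).pow 2).sub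
          ((tendsto_inv_atTop_zero.pow 2).const_mul 2)
      have h0 : (lam + 2 * 0) ^ 2 - 2 * 0 ^ 2 = lam ^ 2 := by ring
      rw [h0] at this
      refine this.congr' ?_
      filter_upwards [eventually_gt_atTop 0] with x hx
      field_simp
  have h2 := conv_tendsto (innerG lam Δ) (lam + Θ) _ ((lam + 2) ^ 2 / (lam + Δ)) (by linarith)
    (by positivity) (innerG_continuous lam Δ) (by
      intro x hx
      refine (innerG_bound lam Δ x hl hΔ hx).trans ?_
      rw [div_mul_eq_mul_div]
      gcongr
      exact hpoly x hx) h1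
  refine (h2.const_mul (lam ^ 2)).congr fun t => ?_
  rw [frakB_eq]
  ring

lemma frakA_bounds (t lam β : ℝ) (hl : 0 < lam) (hβ : 0 ≤ β) (ht : 0 ≤ t) :
    0 ≤ frakA t lam β ∧ frakA t lam β ≤ lam * t := by
  have hs : 0 < β + lam := by linarith
  have he : Real.exp (-((β + lam) * t)) ≤ 1 := by
    apply Real.exp_le_one_iff.2
    have : 0 ≤ (β + lam) * t := by positivity
    linarith
  have he2 := Real.add_one_le_exp (-((β + lam) * t))
  unfold frakA
  constructor
  · apply mul_nonneg (by positivity)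
    have : 0 ≤ (β + lam) * lam * t := by positivity
    nlinarith
  · calc _ ≤ lam / (β + lam) ^ 2 * ((β + lam) ^ 2 * t) := by
          gcongr
          nlinarith
      _ = _ := by field_simp

/-- An integral dominated by `lam * t` is negligible against `t ^ 2`. -/
lemma small_part (L : Measure ℝ) [IsProbabilityMeasure L] (hpos : ∀ᵐ lam ∂L, 0 < lam)
    (hint1 : Integrable (fun lam : ℝ => lam) L) (f : ℝ → ℝ → ℝ)
    (hf : ∀ t lam, 0 < lam → 0 ≤ t → |f t lam| ≤ lam * t) :
    Tendsto (fun t : ℝ => (∫ lam, f t lam ∂L) / t ^ 2) atTop (nhds 0) := by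
  have h0 : Tendsto (fun t : ℝ => (∫ lam, lam ∂L) * t⁻¹) atTop (nhds 0) := by
    simpa using tendsto_inv_atTop_zero.const_mul (∫ lam, lam ∂L)
  apply squeeze_zero_norm' _ h0
  filter_upwards [eventually_gt_atTop 0] with t ht
  have h : ‖∫ lam, f t lam ∂L‖ ≤ ∫ lam, lam * t ∂L := by
    apply norm_integral_le_of_norm_le (hint1.mul_const t)
    filter_upwards [hpos] with lam hl
    exact hf t lam hl ht.le
  rw [integral_mul_const] at h
  rw [norm_div, Real.norm_eq_abs (t ^ 2), abs_of_pos (show 0 < t ^ 2 by positivity),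
    div_le_iff₀ (by positivity)]
  refine h.trans (le_of_eq ?_)
  field_simp

theorem stmt_12 (L : Measure ℝ) [IsProbabilityMeasure L] (hsupp : L (Set.Iic 0) = 0)
    (hint : Integrable (fun lam : ℝ => lam ^ 2) L)
    (β sl ss μl μs : ℝ) (hβ : 0 ≤ β)
    (hsl : 0 ≤ sl) (hss : 0 ≤ ss) (hμl : 0 ≤ μl) (hμs : 0 ≤ μs)
    (R : ℝ → ℝ)
    (hR : ∀ t, R t
        = sl * ∫ lam, (lam * t - frakA t lam β) ∂L
          + ss * ∫ lam, frakA t lam β ∂L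
          + ∫ lam,
              (μl ^ 2 * (frakB t lam 0 0 - 2 * frakB t lam 0 β + frakB t lam β β)
                + 2 * μl * μs * (frakB t lam 0 β - frakB t lam β β)
                + μs ^ 2 * frakB t lam β β) ∂L) :
    Tendsto (fun t : ℝ => R t / t ^ 2) atTop
      (nhds (∫ lam, (μl * β / (β + lam) + μs * lam / (β + lam)) ^ 2 * lam ^ 2 ∂L)) := by
  have hpos : ∀ᵐ lam ∂L, 0 < lam := by
    rw [ae_iff]
    convert hsupp using 2
    ext x
    simp
  have hint1 : Integrable (fun lam : ℝ => lam) L := by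
    refine (hint.add (integrable_const (1:ℝ))).mono' (by fun_prop) ?_
    refine Filter.Eventually.of_forall fun x => ?_
    simp only [Real.norm_eq_abs, Pi.add_apply]
    rw [abs_le]
    constructor <;> nlinarith [sq_nonneg (x - 1), sq_nonneg (x + 1)]
  have hA1 := small_part L hpos hint1 (fun t lam => lam * t - frakA t lam β) (by
    intro t lam hl ht
    have := frakA_bounds t lam β hl hβ ht
    rw [abs_le]
    constructor <;> linarith)
  have hA2 := small_part L hpos hint1 (fun t lam => frakA t lam β) (by
    intro t lam hl ht
    have := frakA_bounds t lam β hl hβ ht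
    rw [abs_le]
    constructor <;> linarith)
  have hB : Tendsto (fun t : ℝ => ∫ lam,
      (μl ^ 2 * (frakB t lam 0 0 - 2 * frakB t lam 0 β + frakB t lam β β)
        + 2 * μl * μs * (frakB t lam 0 β - frakB t lam β β)
        + μs ^ 2 * frakB t lam β β) / t ^ 2 ∂L) atTop
      (nhds (∫ lam, (μl * β / (β + lam) + μs * lam / (β + lam)) ^ 2 * lam ^ 2 ∂L)) := by
    apply tendsto_integral_filter_of_dominated_convergence
      (fun lam => (4 * μl ^ 2 + 4 * μl * μs + μs ^ 2) * (lam ^ 2 + 4 * lam + 4))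
    · refine Filter.Eventually.of_forall fun t => ?_
      have h1 := frakB_continuous t 0 0
      have h2 := frakB_continuous t 0 β
      have h3 := frakB_continuous t β β
      apply Continuous.aestronglyMeasurable
      fun_prop
    · filter_upwards [eventually_ge_atTop (1:ℝ)] with t ht
      filter_upwards [hpos] with lam hl
      have ht0 : 0 ≤ t := by linarith
      have b1 := abs_le.1 (frakB_bound t lam 0 0 hl le_rfl le_rfl ht0)
      have b2 := abs_le.1 (frakB_bound t lam 0 β hl le_rfl hβ ht0)
      have b3 := abs_le.1 (frakB_bound t lam β β hl hβ hβ ht0)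
      have hM : (lam * t + 2) ^ 2 ≤ (lam ^ 2 + 4 * lam + 4) * t ^ 2 := by
        have : (lam ^ 2 + 4 * lam + 4) * t ^ 2 = (lam * t + 2 * t) ^ 2 := by ring
        rw [this]
        have : 0 ≤ lam * t := by positivity
        gcongr
        linarith
      rw [norm_div, Real.norm_eq_abs (t ^ 2), abs_of_pos (show 0 < t ^ 2 by positivity),
        div_le_iff₀ (by positivity), mul_assoc _ _ (t ^ 2), Real.norm_eq_abs]
      generalize frakB t lam 0 0 = x at *
      generalize frakB t lam 0 β = y at *
      generalize frakB t lam β β = z at *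
      generalize (lam ^ 2 + 4 * lam + 4) * t ^ 2 = N at *
      generalize (lam * t + 2) ^ 2 = M at *
      have e1 : |x - 2 * y + z| ≤ 4 * N := by rw [abs_le]; constructor <;> linarith
      have e2 : |y - z| ≤ 2 * N := by rw [abs_le]; constructor <;> linarith
      have e3 : |z| ≤ N := by rw [abs_le]; constructor <;> linarith
      have hmm : 0 ≤ 2 * μl * μs := by positivity
      calc _ ≤ |μl ^ 2 * (x - 2 * y + z)| + |2 * μl * μs * (y - z)| + |μs ^ 2 * z| := abs_add_three _ _ _
        _ = μl ^ 2 * |x - 2 * y + z| + 2 * μl * μs * |y - z| + μs ^ 2 * |z| := by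
            rw [abs_mul, abs_mul, abs_mul _ z, abs_of_nonneg hmm, abs_of_nonneg (sq_nonneg μl),
              abs_of_nonneg (sq_nonneg μs)]
        _ ≤ μl ^ 2 * (4 * N) + 2 * μl * μs * (2 * N) + μs ^ 2 * N := by gcongr
        _ = _ := by ring
    · exact ((hint.add (hint1.const_mul 4)).add (integrable_const (4:ℝ))).const_mul _
    · filter_upwards [hpos] with lam hl
      have c1 := frakB_tendsto lam 0 0 hl le_rfl le_rfl
      have c2 := frakB_tendsto lam 0 β hl le_rfl hβ
      have c3 := frakB_tendsto lam β β hl hβ hβ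
      have c := ((((c1.sub (c2.const_mul 2)).add c3).const_mul (μl ^ 2)).add
        ((c2.sub c3).const_mul (2 * μl * μs))).add (c3.const_mul (μs ^ 2))
      have hs : β + lam ≠ 0 := by linarith
      have hs2 : lam + β ≠ 0 := by linarith
      convert c using 1
      · ext t
        ring
      · congr 1
        rw [add_comm lam β]
        field_simp
        ring
  have hfin := ((hA1.const_mul sl).add (hA2.const_mul ss)).add hB
  simp only [mul_zero, zero_add] at hfin
  refine hfin.congr fun t => ?_
  rw [hR t, integral_div]
  ring
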